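/- Suppose each A(w) ∈ L(𝒵_ℂ,𝒵_ℂ) is invertible with w ↦ A(w)^{-1} analytic on V+iν and ‖A(w)^{-1}‖_ν ≤ K/2; ρ : V+iν → 𝒵_ℂ is analytic; R : (V+iν)×(S+iσ) → 𝒵_ℂ is analytic, quadratic in z (R(w,0) = 0 and ∂_z R(w,0) = 0 for all w), with ‖R‖_{ν,σ} ≤ C_R. Assume 0 < κ ≤ σ − Kδ where δ := ‖ρ‖_ν satisfies δ < κ² K^{-2} C_R^{-1}. Then there exists an analytic map ζ : V+iν → 𝒵_ℂ such that for every w ∈ V+iν, z = ζ(w) solves the equation 0 = ρ(w) + A(w)z + R(w,z), satisfies ‖ζ(w)‖ ≤ K ‖ρ(w)‖, and is the unique solution in the closed ball of radius (K/2)‖ρ(w)‖ centered at −A(w)^{-1}ρ(w). -/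

import Mathlib

open Metric

lemma smi_limit {E F : Type*} [NormedAddCommGroup E] [NormedSpace ℂ E]
    [NormedAddCommGroup F] [NormedSpace ℂ F] [CompleteSpace F]
    {U : Set E} (hU : IsOpen U) (f : ℕ → E → F) (g : E → F) (C q : ℝ)
    (hq0 : 0 ≤ q) (hq1 : q < 1)
    (hf : ∀ n, DifferentiableOn ℂ (f n) U)
    (hfg : ∀ n, ∀ w ∈ U, ‖f n w - g w‖ ≤ C * q ^ n) : DifferentiableOn ℂ g U := by
  intro x hx
  apply DifferentiableAt.differentiableWithinAt
  obtain ⟨r, hr, hrU⟩ := Metric.isOpen_iff.1 hU x hx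
  have hC : 0 ≤ C := by
    have := (norm_nonneg _).trans (hfg 0 x hx)
    simpa using this
  have hsub : ∀ y ∈ ball x (r/2), ball y (r/2) ⊆ U := by
    intro y hy z hz
    apply hrU
    rw [mem_ball] at *
    linarith [dist_triangle z y x]
  have hd : ∀ n, ∀ y ∈ U, HasFDerivAt (f n) (fderiv ℂ (f n) y) y := fun n y hy =>
    ((hf n).differentiableAt (hU.mem_nhds hy)).hasFDerivAt
  have hball : ∀ y ∈ ball x (r/2), y ∈ U := fun y hy => hsub y hy (mem_ball_self (by linarith))
  have hdist : ∀ y ∈ ball x (r/2), ∀ n,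
      dist (fderiv ℂ (f n) y) (fderiv ℂ (f (n+1)) y) ≤ (4 * C / (r/2)) * q ^ n := by
    intro y hy n
    have hbd : ∀ z ∈ U, ‖f n z - f (n+1) z‖ ≤ 2 * C * q ^ n := by
      intro z hz
      have h1 := hfg n z hz
      have h2 := hfg (n+1) z hz
      have h3 : q ^ (n+1) ≤ q ^ n := pow_le_pow_of_le_one hq0 hq1.le (by omega)
      have h4 : f n z - f (n+1) z = (f n z - g z) - (f (n+1) z - g z) := by abel
      rw [h4]
      refine (norm_sub_le _ _).trans ?_
      nlinarith
    have key := Complex.norm_fderiv_le_div_of_mapsTo_ball (f := fun z => f n z - f (n+1) z)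
      (c := y) (R₁ := r/2) (R₂ := 4 * C * q ^ n)
      (((hf n).mono (hsub y hy)).sub ((hf (n+1)).mono (hsub y hy)))
      (by
        intro z hz
        rw [mem_closedBall, dist_eq_norm]
        refine (norm_sub_le _ _).trans ?_
        linarith [hbd z (hsub y hy hz), hbd y (hball y hy)]) (by linarith)
    have e : fderiv ℂ (fun z => f n z - f (n+1) z) y = fderiv ℂ (f n) y - fderiv ℂ (f (n+1)) y :=
      ((hd n y (hball y hy)).sub (hd (n+1) y (hball y hy))).fderiv
    rw [e] at key
    rw [dist_eq_norm]
    refine key.trans (le_of_eq ?_)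
    ring
  have hex : ∀ y, ∃ L, y ∈ ball x (r/2) →
      Filter.Tendsto (fun n => fderiv ℂ (f n) y) Filter.atTop (nhds L) := by
    intro y
    by_cases hy : y ∈ ball x (r/2)
    · obtain ⟨L, hL⟩ := cauchySeq_tendsto_of_complete
        (cauchySeq_of_le_geometric _ _ hq1 (hdist y hy))
      exact ⟨L, fun _ => hL⟩
    · exact ⟨0, fun h => absurd h hy⟩
  choose g' hg' using hex
  have hunif : TendstoUniformlyOn (fun n y => fderiv ℂ (f n) y) g' Filter.atTop (ball x (r/2)) := by
    rw [Metric.tendstoUniformlyOn_iff]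
    intro ε hε
    have ht : Filter.Tendsto (fun n : ℕ => (4 * C / (r/2)) * q ^ n / (1 - q)) Filter.atTop (nhds 0) := by
      have := ((tendsto_pow_atTop_nhds_zero_of_lt_one hq0 hq1).const_mul (4 * C / (r/2))).div_const (1 - q)
      simpa using this
    filter_upwards [ht.eventually (gt_mem_nhds hε)] with n hn y hy
    rw [dist_comm]
    exact (dist_le_of_le_geometric_of_tendsto _ _ hq1 (hdist y hy) (hg' y hy) n).trans_lt hn
  have hx' : x ∈ ball x (r/2) := mem_ball_self (by linarith)
  refine (hasFDerivAt_of_tendstoUniformlyOn isOpen_ball hunif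
    (fun n y hy => hd n y (hball y hy)) (g := g) ?_ hx').differentiableAt
  intro y hy
  rw [tendsto_iff_norm_sub_tendsto_zero]
  refine squeeze_zero (fun _ => norm_nonneg _) (fun n => hfg n y (hball y hy)) ?_
  simpa using (tendsto_pow_atTop_nhds_zero_of_lt_one hq0 hq1).const_mul C

lemma smi_deriv {E : Type*} [NormedAddCommGroup E] [NormedSpace ℂ E]
    (F : E → E) (c : E) (s θ : ℝ) (hs : 0 < s) (hθ0 : 0 ≤ θ) (hθ1 : θ < 1)
    (hF : DifferentiableOn ℂ F (ball c s))
    (hm : ∀ z ∈ ball c s, ‖F z - c‖ ≤ θ * s) (x : E) (hx : x ∈ ball c s) (n : ℕ) :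
    ∃ (G : E → E) (D : E →L[ℂ] E), DifferentiableOn ℂ G (ball c s) ∧
      Set.MapsTo G (ball c s) (ball c s) ∧ G x = F^[n] x ∧
      HasFDerivAt (F^[n]) D x ∧ HasFDerivAt G ((((1 + (1-θ)/2 : ℝ) : ℂ) ^ n) • D) x := by
  induction n with
  | zero =>
    refine ⟨id, ContinuousLinearMap.id ℂ E, differentiableOn_id, Set.mapsTo_id _, rfl, ?_, ?_⟩
    · exact hasFDerivAt_id x
    · simpa using hasFDerivAt_id x
  | succ n ih =>
    obtain ⟨G, D, hG, hGm, hGx, hD, hGD⟩ := ih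
    have hGxb : F^[n] x ∈ ball c s := hGx ▸ hGm hx
    set y := F^[n] x with hy
    have hFy : HasFDerivAt F (fderiv ℂ F y) y :=
      (hF.differentiableAt (isOpen_ball.mem_nhds hGxb)).hasFDerivAt
    set η : ℝ := (1-θ)/2 with hη
    let H : E → E := fun z => F z + (η : ℂ) • (F z - F y)
    have hH : DifferentiableOn ℂ H (ball c s) := by
      exact hF.add ((hF.sub_const _).const_smul _)
    refine ⟨H ∘ G, (fderiv ℂ F y).comp D, hH.comp hG hGm, ?_, ?_, ?_, ?_⟩
    · intro z hz
      have hz' := hGm hz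
      have h1 := hm _ hz'
      have h2 := hm _ hGxb
      rw [mem_ball, dist_eq_norm]
      have e : (H ∘ G) z - c = (F (G z) - c) + (η : ℂ) • ((F (G z) - c) - (F y - c)) := by
        simp [H]; abel
      have hη0 : 0 ≤ η := by rw [hη]; linarith
      have h3 : ‖(η : ℂ) • ((F (G z) - c) - (F y - c))‖ ≤ η * (2 * (θ * s)) := by
        rw [norm_smul, Complex.norm_real, Real.norm_of_nonneg hη0]
        gcongr
        exact (norm_sub_le _ _).trans (by linarith)
      rw [e]
      refine (norm_add_le _ _).trans_lt ?_
      have h4 : 0 < s * (1 - θ)^2 := by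
        have : 0 < 1 - θ := by linarith
        positivity
      rw [hη] at h3 ⊢
      nlinarith
    · simp [H, hGx, Function.iterate_succ_apply', ← hy]
    · rw [Function.iterate_succ']
      exact hFy.comp x hD
    · have hHy : HasFDerivAt H (fderiv ℂ F y + (η:ℂ) • fderiv ℂ F y) (G x) := by
        rw [hGx]
        exact hFy.add ((hFy.sub_const _).const_smul _)
      convert hHy.comp x hGD using 1
      ext v
      simp [pow_succ]
      module

lemma smi_lip {E : Type*} [NormedAddCommGroup E] [NormedSpace ℂ E]
    (F : E → E) (c : E) (s θ : ℝ) (hs : 0 < s) (hθ0 : 0 ≤ θ) (hθ1 : θ < 1)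
    (hF : DifferentiableOn ℂ F (ball c s))
    (hm : ∀ z ∈ ball c s, ‖F z - c‖ ≤ θ * s) (n : ℕ) (x y : E)
    (hx : x ∈ closedBall c (θ * s)) (hy : y ∈ closedBall c (θ * s)) :
    ‖F^[n] y - F^[n] x‖ ≤ 2 / (1-θ) * ((1 + (1-θ)/2)⁻¹) ^ n * ‖y - x‖ := by
  have h1θ : 0 < 1 - θ := by linarith
  have hl : 0 < 1 + (1-θ)/2 := by linarith
  have hθs : θ * s < s := by nlinarith
  have hb : ∀ z ∈ closedBall c (θ * s), ∃ D : E →L[ℂ] E, HasFDerivAt (F^[n]) D z ∧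
      ‖D‖ ≤ 2 / (1-θ) * ((1 + (1-θ)/2)⁻¹) ^ n := by
    intro z hz
    have hzb : z ∈ ball c s := closedBall_subset_ball hθs hz
    obtain ⟨G, D, hG, hGm, hGx, hD, hGD⟩ := smi_deriv F c s θ hs hθ0 hθ1 hF hm z hzb n
    refine ⟨D, hD, ?_⟩
    have hsub : ball z (s - θ * s) ⊆ ball c s := by
      intro u hu
      rw [mem_ball] at *
      rw [mem_closedBall] at hz
      linarith [dist_triangle u z c]
    have key := Complex.norm_fderiv_le_div_of_mapsTo_ball (f := G) (c := z) (R₁ := s - θ * s)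
      (R₂ := 2 * s) (hG.mono hsub) (by
        intro u hu
        have h1 := hGm (hsub hu)
        have h2 := hGm hzb
        rw [mem_ball] at h1 h2
        rw [mem_closedBall]
        linarith [dist_triangle_right (G u) (G z) c]) (by linarith)
    rw [hGD.fderiv, norm_smul, norm_pow, Complex.norm_real, Real.norm_of_nonneg hl.le] at key
    have e : 2 * s / (s - θ * s) = 2 / (1-θ) := by
      have : s - θ * s = s * (1 - θ) := by ring
      rw [this]; field_simp
    rw [e] at key
    rw [inv_pow, ← div_eq_mul_inv, le_div_iff₀ (by positivity)]
    linarith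
  choose! D hD1 hD2 using hb
  letI : NormedSpace ℝ E := NormedSpace.restrictScalars ℝ ℂ E
  exact Convex.norm_image_sub_le_of_norm_hasFDerivWithin_le (𝕜 := ℂ)
    (fun z hz => (hD1 z hz).hasFDerivWithinAt) hD2 (convex_closedBall c (θ * s)) hx hy

lemma smi_EH {E : Type*} [NormedAddCommGroup E] [NormedSpace ℂ E] [CompleteSpace E]
    (F : E → E) (c : E) (s θ : ℝ) (hs : 0 ≤ s) (hθ0 : 0 ≤ θ) (hθ1 : θ < 1)
    (hF : DifferentiableOn ℂ F (ball c s))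
    (hm : ∀ z ∈ closedBall c s, ‖F z - c‖ ≤ θ * s) :
    ∃ x ∈ closedBall c s, F x = x ∧ (∀ y ∈ closedBall c s, F y = y → y = x) ∧
      ∀ n, ‖F^[n] c - x‖ ≤
        (2 / (1-θ) * s / (1 - (1 + (1-θ)/2)⁻¹)) * ((1 + (1-θ)/2)⁻¹) ^ n := by
  have h1θ : 0 < 1 - θ := by linarith
  set q := (1 + (1-θ)/2)⁻¹ with hq
  have hq0 : 0 ≤ q := by positivity
  have hq1 : q < 1 := inv_lt_one_of_one_lt₀ (by linarith)
  rcases hs.eq_or_lt with rfl | hs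
  · have hFc : F c = c := by
      have := hm c (by simp)
      simpa [sub_eq_zero] using this
    refine ⟨c, by simp, hFc, fun y hy _ => by simpa using hy, fun n => ?_⟩
    rw [Function.iterate_fixed hFc]; simp
  have hθs : θ * s < s := by nlinarith
  have hlip := smi_lip F c s θ hs hθ0 hθ1 hF (fun z hz => hm z (ball_subset_closedBall hz))
  have hcl : closedBall c (θ * s) ⊆ closedBall c s := closedBall_subset_closedBall hθs.le
  have hmm : ∀ z ∈ closedBall c s, F z ∈ closedBall c (θ * s) := fun z hz => by
    rw [mem_closedBall, dist_eq_norm]; exact hm z hz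
  have hc : c ∈ closedBall c (θ * s) := mem_closedBall_self (by positivity)
  have hstep : ∀ n, dist (F^[n] c) (F^[n+1] c) ≤ (2 / (1-θ) * s) * q ^ n := by
    intro n
    rw [dist_comm, dist_eq_norm, Function.iterate_succ_apply]
    refine (hlip n c (F c) hc (hmm c (hcl hc))).trans ?_
    have := hm c (hcl hc)
    have h2 : 0 ≤ 2 / (1-θ) * q ^ n := by positivity
    calc _ ≤ 2 / (1-θ) * q ^ n * s := by gcongr; linarith
      _ = _ := by ring
  obtain ⟨x, hx⟩ := cauchySeq_tendsto_of_complete (cauchySeq_of_le_geometric _ _ hq1 hstep)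
  have hit : ∀ n, F^[n] c ∈ closedBall c (θ * s) := by
    intro n
    induction n with
    | zero => exact hc
    | succ n ih => rw [Function.iterate_succ_apply']; exact hmm _ (hcl ih)
  have hxm : x ∈ closedBall c (θ * s) :=
    isClosed_closedBall.mem_of_tendsto hx (Filter.Eventually.of_forall hit)
  have hFx : F x = x := by
    have hcont : ContinuousAt F x := (hF.differentiableAt (isOpen_ball.mem_nhds
      (closedBall_subset_ball hθs hxm))).continuousAt
    have h1 : Filter.Tendsto (fun n => F^[n+1] c) Filter.atTop (nhds (F x)) := by
      simp only [Function.iterate_succ_apply']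
      exact hcont.tendsto.comp hx
    exact tendsto_nhds_unique h1 (hx.comp (Filter.tendsto_add_atTop_nat 1))
  refine ⟨x, hcl hxm, hFx, ?_, ?_⟩
  · intro y hy hFy
    have hym : y ∈ closedBall c (θ * s) := hFy ▸ hmm y hy
    have h0 : ‖y - x‖ ≤ 0 := by
      have ht : Filter.Tendsto (fun n : ℕ => 2 / (1-θ) * q ^ n * ‖y - x‖) Filter.atTop (nhds 0) := by
        simpa using ((tendsto_pow_atTop_nhds_zero_of_lt_one hq0 hq1).const_mul
          (2 / (1-θ))).mul_const (‖y - x‖)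
      refine ge_of_tendsto' ht fun n => ?_
      have := hlip n x y hxm hym
      rwa [Function.iterate_fixed hFy, Function.iterate_fixed hFx] at this
    exact sub_eq_zero.1 (norm_le_zero_iff.1 h0)
  · intro n
    have := dist_le_of_le_geometric_of_tendsto _ _ hq1 hstep hx n
    rw [dist_eq_norm] at this
    refine this.trans (le_of_eq ?_)
    ring

/-- **Existence, bound and local uniqueness of the improved slow manifold
(Lemma `analimpl`).**
Under (G1)-(G3)-type assumptions on `A`, `ρ`, `R` on the complex thickenings
`V+iν`, `S+iσ`, with `0 < κ ≤ σ − Kδ` and `δ < κ²K⁻²C_R⁻¹`, the equation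
`0 = ρ(w) + A(w)z + R(w,z)` has an analytic solution `z = ζ(w)` with
`‖ζ(w)‖ ≤ K‖ρ(w)‖`, unique in the closed ball of radius `(K/2)‖ρ(w)‖`
around `−A(w)⁻¹ρ(w)`. -/
theorem slow_manifold_implicit_function
    {𝒲 𝒵 : Type*} [NormedAddCommGroup 𝒲] [NormedSpace ℂ 𝒲]
    [NormedAddCommGroup 𝒵] [NormedSpace ℂ 𝒵] [CompleteSpace 𝒵]
    (V : Set 𝒲) (S : Set 𝒵) (hS0 : (0 : 𝒵) ∈ S)
    (ν σ K C_R κ δ : ℝ)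
    (hν : 0 < ν) (hσ : 0 < σ) (hK : 0 < K) (hCR : 0 < C_R)
    (A Ainv : 𝒲 → 𝒵 →L[ℂ] 𝒵)
    (hA_inv : ∀ w ∈ thickening ν V,
      (A w).comp (Ainv w) = ContinuousLinearMap.id ℂ 𝒵 ∧
      (Ainv w).comp (A w) = ContinuousLinearMap.id ℂ 𝒵)
    (hAinv_an : DifferentiableOn ℂ Ainv (thickening ν V))
    (hAinv_bdd : ∀ w ∈ thickening ν V, ‖Ainv w‖ ≤ K / 2)
    (ρ : 𝒲 → 𝒵) (hρ_an : DifferentiableOn ℂ ρ (thickening ν V))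
    (hρ_bdd : ∀ w ∈ thickening ν V, ‖ρ w‖ ≤ δ)
    (R : 𝒲 → 𝒵 → 𝒵)
    (hR_an : DifferentiableOn ℂ (fun p : 𝒲 × 𝒵 => R p.1 p.2)
      (thickening ν V ×ˢ thickening σ S))
    (hR0 : ∀ w ∈ thickening ν V, R w 0 = 0)
    (hdR0 : ∀ w ∈ thickening ν V, fderiv ℂ (R w) 0 = 0)
    (hR_bdd : ∀ w ∈ thickening ν V, ∀ z ∈ thickening σ S, ‖R w z‖ ≤ C_R)
    (hκ : 0 < κ) (hκσ : κ ≤ σ - K * δ)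
    (hδ : δ < κ ^ 2 / (K ^ 2 * C_R)) :
    ∃ ζ : 𝒲 → 𝒵, DifferentiableOn ℂ ζ (thickening ν V) ∧
      ∀ w ∈ thickening ν V,
        ρ w + A w (ζ w) + R w (ζ w) = 0 ∧
        ‖ζ w‖ ≤ K * ‖ρ w‖ ∧
        ‖ζ w - (-(Ainv w (ρ w)))‖ ≤ K / 2 * ‖ρ w‖ ∧
        ∀ z : 𝒵, ‖z - (-(Ainv w (ρ w)))‖ ≤ K / 2 * ‖ρ w‖ →
          ρ w + A w z + R w z = 0 → z = ζ w := by
  rcases (thickening ν V).eq_empty_or_nonempty with hemp | ⟨w₀, hw₀⟩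
  · rw [hemp]
    exact ⟨0, by simp, by simp⟩
  have hδ0 : 0 ≤ δ := (norm_nonneg _).trans (hρ_bdd w₀ hw₀)
  have hball : ball (0 : 𝒵) σ ⊆ thickening σ S := ball_subset_thickening hS0 σ
  have hUo : IsOpen (thickening ν V) := isOpen_thickening
  have hKδ : 0 ≤ K * δ := by positivity
  have hκσ' : κ ≤ σ := by linarith
  have hRw : ∀ w ∈ thickening ν V, DifferentiableOn ℂ (R w) (ball 0 σ) := by
    intro w hw
    exact hR_an.comp (f := fun z => (w, z)) (by fun_prop) (fun z hz => ⟨hw, hball hz⟩)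
  have hsch : ∀ w ∈ thickening ν V, ∀ z ∈ ball (0 : 𝒵) σ,
      ‖R w z‖ ≤ C_R * (‖z‖ / σ) ^ 2 := by
    intro w hw z hz
    have hd0 : HasFDerivAt (R w) (0 : 𝒵 →L[ℂ] 𝒵) 0 := by
      rw [← hdR0 w hw]
      exact ((hRw w hw).differentiableAt (ball_mem_nhds 0 hσ)).hasFDerivAt
    have := Complex.dist_le_mul_div_pow_of_mapsTo_ball_of_isLittleO (n := 1) (R₂ := C_R)
      (hRw w hw) (by
        intro u hu
        simpa [hR0 w hw] using hR_bdd w hw u (hball hu)) (by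
        have := hd0.isLittleO
        simpa [hR0 w hw] using this.norm_right) hz
    simpa [hR0 w hw] using this
  set θ : ℝ := C_R * K ^ 2 * δ / σ ^ 2 with hθ
  have hθ0 : 0 ≤ θ := by positivity
  have hθ1 : θ < 1 := by
    rw [lt_div_iff₀ (by positivity)] at hδ
    rw [hθ, div_lt_one (by positivity)]
    have : κ ^ 2 ≤ σ ^ 2 := by gcongr
    nlinarith
  let c : 𝒲 → 𝒵 := fun w => -(Ainv w (ρ w))
  let F : 𝒲 → 𝒵 → 𝒵 := fun w z => -(Ainv w (ρ w + R w z))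
  have hAn : ∀ w ∈ thickening ν V, ∀ v, ‖Ainv w v‖ ≤ K / 2 * ‖v‖ := fun w hw v =>
    (Ainv w).le_of_opNorm_le (hAinv_bdd w hw) v
  have hnorm : ∀ w ∈ thickening ν V, ∀ z ∈ closedBall (c w) (K / 2 * ‖ρ w‖),
      ‖z‖ ≤ K * ‖ρ w‖ := by
    intro w hw z hz
    rw [mem_closedBall, dist_eq_norm] at hz
    have h1 : ‖c w‖ ≤ K / 2 * ‖ρ w‖ := by simpa [c] using hAn w hw (ρ w)
    have h2 := norm_add_le (z - c w) (c w)
    rw [sub_add_cancel] at h2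
    linarith
  have hinb : ∀ w ∈ thickening ν V, ∀ z ∈ closedBall (c w) (K / 2 * ‖ρ w‖),
      z ∈ ball (0 : 𝒵) σ := by
    intro w hw z hz
    rw [mem_ball_zero_iff]
    have h1 := hnorm w hw z hz
    have h2 : K * ‖ρ w‖ ≤ K * δ := by gcongr; exact hρ_bdd w hw
    linarith
  have hFm : ∀ w ∈ thickening ν V, ∀ z ∈ closedBall (c w) (K / 2 * ‖ρ w‖),
      ‖F w z - c w‖ ≤ θ * (K / 2 * ‖ρ w‖) := by
    intro w hw z hz
    have e : F w z - c w = -(Ainv w (R w z)) := by simp [F, c]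
    rw [e, norm_neg]
    refine (hAn w hw _).trans ?_
    have h1 := hsch w hw z (hinb w hw z hz)
    have h2 := hnorm w hw z hz
    have h3 := hρ_bdd w hw
    calc K / 2 * ‖R w z‖ ≤ K / 2 * (C_R * ((K * ‖ρ w‖) / σ) ^ 2) := by
          gcongr
          exact h1.trans (by gcongr)
      _ = K / 2 * (C_R * K ^ 2 * ‖ρ w‖ * ‖ρ w‖ / σ ^ 2) := by ring
      _ ≤ K / 2 * (C_R * K ^ 2 * δ * ‖ρ w‖ / σ ^ 2) := by gcongr
      _ = θ * (K / 2 * ‖ρ w‖) := by rw [hθ]; ring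
  have hEH : ∀ w ∈ thickening ν V, _ := fun w hw =>
    smi_EH (F w) (c w) (K / 2 * ‖ρ w‖) θ (by positivity) hθ0 hθ1 (by
      have : DifferentiableOn ℂ (R w) (ball (c w) (K / 2 * ‖ρ w‖)) :=
        (hRw w hw).mono fun z hz => hinb w hw z (ball_subset_closedBall hz)
      exact ((Ainv w).differentiable.comp_differentiableOn (this.const_add (ρ w))).neg) (hFm w hw)
  choose! ζ hζm hζF hζu hζn using hEH
  have hfix : ∀ w ∈ thickening ν V, ∀ z, ρ w + A w z + R w z = 0 ↔ F w z = z := by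
    intro w hw z
    have h1 : ∀ v, A w (Ainv w v) = v := fun v => DFunLike.congr_fun (hA_inv w hw).1 v
    have h2 : ∀ v, Ainv w (A w v) = v := fun v => DFunLike.congr_fun (hA_inv w hw).2 v
    constructor
    · intro h
      have : ρ w + R w z = -(A w z) := by
        rw [eq_neg_iff_add_eq_zero, ← h]; abel
      show -(Ainv w (ρ w + R w z)) = z
      rw [this, map_neg, h2, neg_neg]
    · intro h
      have h3 : A w z = -(ρ w + R w z) := by
        rw [← h1 (ρ w + R w z), ← map_neg]
        exact congrArg (A w) h.symm
      rw [h3]; abel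
  have hq0 : (0:ℝ) ≤ (1 + (1-θ)/2)⁻¹ := inv_nonneg.2 (by linarith)
  have hq1 : (1 + (1-θ)/2)⁻¹ < 1 := inv_lt_one_of_one_lt₀ (by linarith)
  refine ⟨ζ, ?_, fun w hw => ⟨(hfix w hw _).2 (hζF w hw), hnorm w hw _ (hζm w hw), ?_, ?_⟩⟩
  · have hitm : ∀ w ∈ thickening ν V, ∀ n, (F w)^[n] (c w) ∈ closedBall (c w) (K / 2 * ‖ρ w‖) := by
      intro w hw n
      induction n with
      | zero => exact mem_closedBall_self (by positivity)
      | succ n ih =>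
        rw [Function.iterate_succ_apply', mem_closedBall, dist_eq_norm]
        refine (hFm w hw _ ih).trans ?_
        exact mul_le_of_le_one_left (by positivity) hθ1.le
    refine smi_limit hUo (fun n w => (F w)^[n] (c w)) ζ
      (2 / (1-θ) * (K / 2 * δ) / (1 - (1 + (1-θ)/2)⁻¹)) _ hq0 hq1 ?_ ?_
    · intro n
      induction n with
      | zero => exact (hAinv_an.clm_apply hρ_an).neg
      | succ n ih =>
        simp only [Function.iterate_succ_apply']
        have h1 : DifferentiableOn ℂ (fun w => R w ((F w)^[n] (c w))) (thickening ν V) :=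
          hR_an.comp (f := fun w => (w, (F w)^[n] (c w))) (differentiableOn_id.prodMk ih)
            (fun w hw => ⟨hw, hball (hinb w hw _ (hitm w hw n))⟩)
        exact (hAinv_an.clm_apply (hρ_an.add h1)).neg
    · intro n w hw
      refine (hζn w hw n).trans ?_
      have h1 : 0 < 1 - θ := by linarith
      have h2 : 0 < 1 - (1 + (1-θ)/2)⁻¹ := by linarith
      have h3 := hρ_bdd w hw
      gcongr
  · have := hζm w hw
    rwa [mem_closedBall, dist_eq_norm] at this
  · intro z hz h
    refine hζu w hw z ?_ ((hfix w hw z).1 h)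
    rw [mem_closedBall, dist_eq_norm]
    exact hz
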